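/- Let 𝒞 be a small category, (−⊗I) elementary homotopy data on Psh(𝒞), and T a monad on Psh(𝒞) satisfying (M1)–(M3). For any maps f, g : X → Y of presheaves, if there is a homotopy θ : X⊗I → Y from f to g, then there is a homotopy TX⊗I → TY from Tf to Tg. -/

import Mathlib

open CategoryTheory Category Limits

universe w v u

/-- The category of presheaves on a small category. -/
abbrev Psh (C : Type u) [SmallCategory C] := Cᵒᵖ ⥤ Type u

namespace PaperMSMonad

/-- `f` is a retract of `g` in the arrow category. -/
def IsRetractOf {D : Type*} [Category D] {X Y Z W : D} (f : X ⟶ Y) (g : Z ⟶ W) : Prop :=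
  ∃ (i : X ⟶ Z) (r : Z ⟶ X) (i' : Y ⟶ W) (r' : W ⟶ Y),
    i ≫ r = 𝟙 X ∧ i' ≫ r' = 𝟙 Y ∧ i ≫ g = f ≫ i' ∧ g ≫ r' = r ≫ f

/-- The cocone on the restriction of `F : J ⥤ D` to `Set.Iio j`, with point `F.obj j`. -/
@[simps]
def coconeLT {D : Type*} [Category D] {J : Type w} [Preorder J] (F : J ⥤ D) (j : J) :
    Cocone ((Monotone.functor (f := (Subtype.val : Set.Iio j → J))
      (fun _ _ h => h)) ⋙ F) where
  pt := F.obj j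
  ι :=
    { app := fun i => F.map (homOfLE i.2.le)
      naturality := fun i i' g => by
        dsimp [Monotone.functor]
        rw [Category.comp_id, ← F.map_comp]
        rfl }

/-- A morphism property is stable under transfinite composition if, for every well-ordered
type `J`, every functor `F : J ⥤ D` which is continuous at limit stages and whose successor
maps all lie in `W`, and every colimit cocone on `F`, the component of the cocone at the
bottom element lies in `W`. -/
def StableUnderTransfiniteComposition {D : Type*} [Category D]
    (W : MorphismProperty D) : Prop :=
  ∀ (J : Type w) (_ : LinearOrder J) (_ : SuccOrder J) (_ : OrderBot J) (_ : WellFoundedLT J)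
    (F : J ⥤ D),
    (∀ (j : J), ¬IsMax j → W (F.map (homOfLE (Order.le_succ j)))) →
    (∀ (j : J), Order.IsSuccLimit j → Nonempty (IsColimit (coconeLT F j))) →
    ∀ (c : Cocone F), Nonempty (IsColimit c) → W (c.ι.app ⊥)

/-- A class of morphisms is weakly saturated if it contains all isomorphisms and is closed
under pushout (cobase change), retracts and transfinite composition. -/
def IsWeaklySaturated {D : Type*} [Category D] (W : MorphismProperty D) : Prop :=
  (∀ ⦃X Y : D⦄ (f : X ⟶ Y), IsIso f → W f) ∧
  (∀ ⦃Z X Y P : D⦄ (t : Z ⟶ X) (f : Z ⟶ Y) (g : X ⟶ P) (b : Y ⟶ P),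
      IsPushout t f g b → W f → W g) ∧
  (∀ ⦃X Y Z W' : D⦄ (f : X ⟶ Y) (g : Z ⟶ W'), IsRetractOf f g → W g → W f) ∧
  StableUnderTransfiniteComposition.{w} W

/-- The saturated class generated by `S`: the smallest weakly saturated class containing `S`. -/
def SaturatedClassGen {D : Type*} [Category D] (S : MorphismProperty D) :
    MorphismProperty D :=
  fun _ _ f => ∀ W : MorphismProperty D, IsWeaklySaturated.{w} W → S ≤ W → W f

/-- The maps having the right lifting property with respect to all maps in `S`. -/
def RLP {D : Type*} [Category D] (S : MorphismProperty D) : MorphismProperty D :=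
  fun _ _ g => ∀ ⦃A B : D⦄ (f : A ⟶ B), S f → HasLiftingProperty f g

/-- The maps having the left lifting property with respect to all maps in `S`. -/
def LLP {D : Type*} [Category D] (S : MorphismProperty D) : MorphismProperty D :=
  fun _ _ f => ∀ ⦃A B : D⦄ (g : A ⟶ B), S g → HasLiftingProperty f g

end PaperMSMonad

namespace PaperMSMonad

variable {C : Type u} [SmallCategory C]

/-- Elementary homotopy data on the category of presheaves on `C`: a functorial cylinder
`X ↦ X ⊗ I` with endpoint inclusions `∂⁰`, `∂¹` and projection `σ`, such that
`[∂⁰,∂¹] : X + X → X ⊗ I` is always a monomorphism, the cylinder functor preserves small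
colimits and monomorphisms, and the endpoint naturality squares at monomorphisms
are pullbacks. -/
structure ElementaryHomotopyData (C : Type u) [SmallCategory C] where
  cyl : Psh C ⥤ Psh C
  d0 : 𝟭 (Psh C) ⟶ cyl
  d1 : 𝟭 (Psh C) ⟶ cyl
  σ : cyl ⟶ 𝟭 (Psh C)
  d0_σ : ∀ X : Psh C, d0.app X ≫ σ.app X = 𝟙 X
  d1_σ : ∀ X : Psh C, d1.app X ≫ σ.app X = 𝟙 X
  mono_pair : ∀ X : Psh C, Mono (coprod.desc (d0.app X) (d1.app X))
  preservesColimits : PreservesColimitsOfSize.{u, u} cyl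
  preservesMono : ∀ ⦃K L : Psh C⦄ (j : K ⟶ L), Mono j → Mono (cyl.map j)
  isPullback0 : ∀ ⦃K L : Psh C⦄ (j : K ⟶ L), Mono j →
    IsPullback j (d0.app K) (d0.app L) (cyl.map j)
  isPullback1 : ∀ ⦃K L : Psh C⦄ (j : K ⟶ L), Mono j →
    IsPullback j (d1.app K) (d1.app L) (cyl.map j)

namespace ElementaryHomotopyData

variable (E : ElementaryHomotopyData C)

/-- `f ≃ g`: there is a homotopy `θ : X ⊗ I ⟶ Y` from `f` to `g`. -/
def Htpy {X Y : Psh C} (f g : X ⟶ Y) : Prop :=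
  ∃ θ : E.cyl.obj X ⟶ Y, E.d0.app X ≫ θ = f ∧ E.d1.app X ≫ θ = g

/-- `f ≃* g`: the equivalence relation generated by the homotopy relation. -/
def HtpyStar {X Y : Psh C} (f g : X ⟶ Y) : Prop :=
  Relation.EqvGen (fun a b : X ⟶ Y => E.Htpy a b) f g

/-- `[X,Y]`: the quotient of `Hom(X,Y)` by the equivalence relation generated by homotopy. -/
def HQ (X Y : Psh C) :=
  Quot (fun a b : X ⟶ Y => E.Htpy a b)

/-- The class of `f : X ⟶ Y` in `[X,Y]`. -/
def HQ.mk {X Y : Psh C} (f : X ⟶ Y) : E.HQ X Y :=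
  Quot.mk _ f

/-- `[f,A] : [Y,A] → [X,A]`, precomposition with `f` on homotopy classes. -/
def precomp {X Y A : Psh C} (f : X ⟶ Y) : E.HQ Y A → E.HQ X A :=
  Quot.lift (fun h => HQ.mk E (f ≫ h)) (fun h h' hh => Quot.sound (by
    obtain ⟨θ, h0, h1⟩ := hh
    exact ⟨E.cyl.map f ≫ θ,
      by rw [← Category.assoc, ← E.d0.naturality, Functor.id_map, Category.assoc, h0],
      by rw [← Category.assoc, ← E.d1.naturality, Functor.id_map, Category.assoc, h1]⟩))

/-- For a monomorphism `j : K ⟶ L` the canonical map `K⊗I ∪ L⊗{0} ⟶ L⊗I`. -/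
noncomputable def gluing0 {K L : Psh C} (j : K ⟶ L) :
    pushout (E.d0.app K) j ⟶ E.cyl.obj L :=
  pushout.desc (E.cyl.map j) (E.d0.app L) (by rw [← E.d0.naturality j]; rfl)

/-- For a monomorphism `j : K ⟶ L` the canonical map `K⊗I ∪ L⊗{1} ⟶ L⊗I`. -/
noncomputable def gluing1 {K L : Psh C} (j : K ⟶ L) :
    pushout (E.d1.app K) j ⟶ E.cyl.obj L :=
  pushout.desc (E.cyl.map j) (E.d1.app L) (by rw [← E.d1.naturality j]; rfl)

/-- For a map `j : K ⟶ L` the canonical map `K⊗I ∪ L⊗∂I ⟶ L⊗I`. -/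
noncomputable def gluingBoth {K L : Psh C} (j : K ⟶ L) :
    pushout (coprod.desc (E.d0.app K) (E.d1.app K)) (coprod.map j j) ⟶ E.cyl.obj L :=
  pushout.desc (E.cyl.map j) (coprod.desc (E.d0.app L) (E.d1.app L)) (by
    apply coprod.hom_ext
    · rw [coprod.inl_desc_assoc, coprod.inl_map_assoc, coprod.inl_desc]
      exact (E.d0.naturality j).symm
    · rw [coprod.inr_desc_assoc, coprod.inr_map_assoc, coprod.inr_desc]
      exact (E.d1.naturality j).symm)

/-- The class `Λ⁰_I(S)`. -/
inductive Lambda0 (E : ElementaryHomotopyData C) (S : MorphismProperty (Psh C)) :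
    ∀ ⦃X Y : Psh C⦄, (X ⟶ Y) → Prop
  | ofS ⦃X Y : Psh C⦄ (f : X ⟶ Y) : S f → Lambda0 E S f
  | glue0 ⦃K L : Psh C⦄ (j : K ⟶ L) : Mono j → Lambda0 E S (E.gluing0 j)
  | glue1 ⦃K L : Psh C⦄ (j : K ⟶ L) : Mono j → Lambda0 E S (E.gluing1 j)

/-- The operation `𝚲(-)` applied to a class of maps. -/
inductive LambdaStep (E : ElementaryHomotopyData C) (P : MorphismProperty (Psh C)) :
    ∀ ⦃X Y : Psh C⦄, (X ⟶ Y) → Prop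
  | glue ⦃K L : Psh C⦄ (j : K ⟶ L) : P j → LambdaStep E P (E.gluingBoth j)

/-- The class `Λⁿ_I(S)`. -/
def LambdaN (S : MorphismProperty (Psh C)) : ℕ → MorphismProperty (Psh C)
  | 0 => Lambda0 E S
  | (n + 1) => LambdaStep E (LambdaN S n)

/-- The class `Λ_I(S) = ⋃ₙ Λⁿ_I(S)`. -/
def Lambda (S : MorphismProperty (Psh C)) : MorphismProperty (Psh C) :=
  fun _ _ f => ∃ n : ℕ, LambdaN E S n f

/-- The class `𝔄_I(S)` of anodyne extensions: maps with the left lifting property with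
respect to every map having the right lifting property with respect to `Λ_I(S)`. -/
def Anodyne (S : MorphismProperty (Psh C)) : MorphismProperty (Psh C) :=
  LLP (RLP (E.Lambda S))

/-- `A` is naively fibrant if `A ⟶ 1` has the right lifting property with respect to all
anodyne extensions. -/
def NaivelyFibrant (S : MorphismProperty (Psh C)) (A : Psh C) : Prop :=
  RLP (E.Anodyne S) (terminal.from A)

/-- A map `f : X ⟶ Y` is a `T`-weak equivalence if `[f,A] : [Y,A] → [X,A]` is a bijection
for every `T`-algebra `A`. -/
def TWeakEquiv (T : Monad (Psh C)) : MorphismProperty (Psh C) :=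
  fun _ _ f => ∀ A : T.Algebra, Function.Bijective (E.precomp (A := A.A) f)

end ElementaryHomotopyData

/-- The generating set of units `𝔊 = {η_{Gⁱ} : Gⁱ ⟶ T(Gⁱ)}`. -/
inductive unitsOf (T : Monad (Psh C)) {ι : Type u} (G : ι → Psh C) :
    ∀ ⦃X Y : Psh C⦄, (X ⟶ Y) → Prop
  | mk (i : ι) : unitsOf T G (T.η.app (G i))

end PaperMSMonad

namespace PaperMSMonad

open CategoryTheory Category Limits

/-!
A homotopy from `f` to `g` becomes, after composing with `η_Y`, a homotopy from `η_X ≫ Tf` to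
`η_X ≫ Tg`. Since `TY` is naively fibrant, it extends along `η_X` to a homotopy from `Tf` to `Tg`
as soon as the inclusion `X⊗I ∪ TX⊗∂I ⟶ TX⊗I` is anodyne.

This inclusion is the Leibniz pushout of `η_X` with `-⊗∂I ⟶ -⊗I`. Because `-⊗∂I` and `-⊗I` have
right adjoints, it lifts against `p` if and only if `η_X` lifts against the Leibniz pullback of
`p`. The maps lifting against a fixed map form a weakly saturated class, so it suffices to consider
the generators `η_{Gⁱ}`, whose Leibniz pushouts belong to `Λ¹_I(𝔊)`.
-/

section Saturation

variable {D : Type*} [Category D]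

lemma isWeaklySaturated_of_isStable (W : MorphismProperty D) [W.ContainsIdentities]
    [W.IsStableUnderCobaseChange] [W.IsStableUnderRetracts]
    [W.IsStableUnderTransfiniteComposition.{w}] : IsWeaklySaturated.{w} W := by
  refine ⟨fun _ _ f _ ↦ W.of_isIso f, fun _ _ _ _ _ _ _ _ sq hf ↦ W.of_isPushout sq hf, ?_, ?_⟩
  · rintro _ _ _ _ f g ⟨i, r, i', r', hir, hir', hi, hr⟩ hg
    exact W.of_retract
      { i := Arrow.homMk i i' hi
        r := Arrow.homMk r r' hr.symm
        retract := by ext <;> simp [hir, hir'] } hg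
  · intro J _ _ _ _ F hsucc hlim c hc
    have : F.IsWellOrderContinuous := ⟨hlim⟩
    exact W.transfiniteCompositionsOfShape_le J _
      ⟨{ F := F
         isoBot := Iso.refl _
         incl := c.ι
         isColimit := hc.some
         map_mem := hsucc }⟩

lemma saturatedClassGen_le_llp_rlp (S : MorphismProperty D) :
    SaturatedClassGen.{w} S ≤ S.rlp.llp :=
  fun _ _ _ hf ↦ hf _ (isWeaklySaturated_of_isStable.{w} _) S.le_llp_rlp

end Saturation

section Leibniz

variable {C₁ C₂ C₃ : Type*} [Category C₁] [Category C₂] [Category C₃]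

lemma llp_pushoutObjObj_ι_of_saturatedClassGen [HasPullbacks C₂] {F : C₁ ⥤ C₂ ⥤ C₃}
    {G : C₁ᵒᵖ ⥤ C₃ ⥤ C₂} (adj₂ : F ⊣₂ G) {X Y : C₁} {f : X ⟶ Y} {S : MorphismProperty C₂}
    {W : MorphismProperty C₃}
    (hS : ∀ ⦃K L : C₂⦄ (j : K ⟶ L), S j → ∃ sq : F.PushoutObjObj f j, W.llp sq.ι)
    {K L : C₂} {j : K ⟶ L} (hj : SaturatedClassGen.{w} S j) (sq : F.PushoutObjObj f j) :
    W.llp sq.ι := by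
  intro A B p hp
  let sqp := Functor.PullbackObjObj.ofHasPullback G f p
  have rlp_π : S.rlp sqp.π := fun _ _ i hi ↦
    have ⟨sqi, h⟩ := hS i hi
    (adj₂.hasLiftingProperty_iff sqi sqp).1 (h p hp)
  exact (adj₂.hasLiftingProperty_iff sq sqp).2 (saturatedClassGen_le_llp_rlp S j hj _ rlp_π)

/-- The right adjoints of the functors `F.obj X`, assembled into a bifunctor by passing to
conjugate natural transformations. -/
noncomputable def parametrizedRightAdjoint (F : C₁ ⥤ C₂ ⥤ C₃)
    [∀ X, (F.obj X).IsLeftAdjoint] : C₁ᵒᵖ ⥤ C₃ ⥤ C₂ where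
  obj X := (F.obj X.unop).rightAdjoint
  map f := conjugateEquiv (.ofIsLeftAdjoint _) (.ofIsLeftAdjoint _) (F.map f.unop)

/-- The parametrized adjunction which says that a bifunctor whose functors `F.obj X` are left
adjoints has a right adjoint with the same parameter. -/
noncomputable def parametrizedAdjunctionOfIsLeftAdjoint (F : C₁ ⥤ C₂ ⥤ C₃)
    [∀ X, (F.obj X).IsLeftAdjoint] : F ⊣₂ parametrizedRightAdjoint F where
  adj X := .ofIsLeftAdjoint (F.obj X)
  unit_whiskerRight_map f := by
    ext K
    exact (unit_conjugateEquiv _ _ (F.map f) K).symm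

/-- Evaluation of left adjoint functors, as a bifunctor. It lets a natural transformation between
two left adjoints be one of the two arguments of a Leibniz pushout. -/
abbrev leftAdjointEval (C₂ C₃ : Type*) [Category C₂] [Category C₃] :
    ObjectProperty.FullSubcategory (fun F : C₂ ⥤ C₃ ↦ F.IsLeftAdjoint) ⥤ C₂ ⥤ C₃ :=
  ObjectProperty.ι _

instance (F : ObjectProperty.FullSubcategory fun F : C₂ ⥤ C₃ ↦ F.IsLeftAdjoint) :
    ((leftAdjointEval C₂ C₃).obj F).IsLeftAdjoint :=
  F.property

end Leibniz

section SelfCoprod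

variable (D : Type*) [Category D]

/-- The functor `X ↦ X + X`, which for presheaves is `X ↦ X⊗∂I`. -/
noncomputable abbrev selfCoprod [HasBinaryCoproducts D] : D ⥤ D where
  obj X := X ⨿ X
  map f := coprod.map f f

/-- The functor `X ↦ X × X`, right adjoint to `selfCoprod`. -/
noncomputable abbrev selfProd [HasBinaryProducts D] : D ⥤ D where
  obj X := X ⨯ X
  map f := prod.map f f

variable {D} [HasBinaryCoproducts D] [HasBinaryProducts D]

/-- The bijection between maps `X + X ⟶ Y` and maps `X ⟶ Y × Y`, used to build
`selfCoprodAdjunction`. -/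
@[simps]
noncomputable def selfCoprodHomEquiv (X Y : D) : (X ⨿ X ⟶ Y) ≃ (X ⟶ Y ⨯ Y) where
  toFun f := prod.lift (coprod.inl ≫ f) (coprod.inr ≫ f)
  invFun g := coprod.desc (g ≫ prod.fst) (g ≫ prod.snd)
  left_inv f := by
    apply coprod.hom_ext <;>
      simp [coprod.inl_desc, coprod.inr_desc, Limits.prod.lift_fst, Limits.prod.lift_snd]
  right_inv g := by
    apply Limits.prod.hom_ext <;>
      simp [coprod.inl_desc, coprod.inr_desc, Limits.prod.lift_fst, Limits.prod.lift_snd]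

/-- The adjunction between `X ↦ X + X` and `X ↦ X × X`, which makes `X ↦ X⊗∂I` a left adjoint. -/
noncomputable def selfCoprodAdjunction : selfCoprod D ⊣ selfProd D :=
  .mkOfHomEquiv
    { homEquiv := selfCoprodHomEquiv
      homEquiv_naturality_left_symm f g := by apply coprod.hom_ext <;> simp
      homEquiv_naturality_right f g := by apply Limits.prod.hom_ext <;> simp }

instance : (selfCoprod D).IsLeftAdjoint :=
  selfCoprodAdjunction.isLeftAdjoint

end SelfCoprod

namespace ElementaryHomotopyData

variable {C : Type u} [SmallCategory C] (E : ElementaryHomotopyData C)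

instance : E.cyl.IsLeftAdjoint :=
  have := E.preservesColimits
  Presheaf.isLeftAdjoint_of_preservesColimits.{u} E.cyl

/-- The natural transformation `[∂⁰, ∂¹] : X + X ⟶ X⊗I`. -/
noncomputable def boundary : selfCoprod (Psh C) ⟶ E.cyl where
  app X := coprod.desc (E.d0.app X) (E.d1.app X)
  naturality X Y f := by
    have h0 : f ≫ E.d0.app Y = E.d0.app X ≫ E.cyl.map f := E.d0.naturality f
    have h1 : f ≫ E.d1.app Y = E.d1.app X ≫ E.cyl.map f := E.d1.naturality f
    simp [h0, h1]

/-- The square exhibiting `K⊗I ∪ L⊗∂I ⟶ L⊗I` as the Leibniz pushout of `E.boundary` and `j`. -/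
noncomputable def gluingBothPushoutObjObj {K L : Psh C} (j : K ⟶ L) :
    (leftAdjointEval (Psh C) (Psh C)).PushoutObjObj (X₁ := ⟨selfCoprod (Psh C), inferInstance⟩)
      (Y₁ := ⟨E.cyl, inferInstance⟩) (ObjectProperty.homMk E.boundary) j where
  pt := pushout (coprod.desc (E.d0.app K) (E.d1.app K)) (coprod.map j j)
  inl := pushout.inl _ _
  inr := pushout.inr _ _
  isPushout := IsPushout.of_hasPushout _ _
  ι := E.gluingBoth j
  inl_ι := pushout.inl_desc _ _ _
  inr_ι := pushout.inr_desc _ _ _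

variable {E} {S : MorphismProperty (Psh C)}

theorem anodyne_gluingBoth_of_saturatedClassGen {K L : Psh C} {j : K ⟶ L}
    (hj : SaturatedClassGen.{w} S j) : E.Anodyne S (E.gluingBoth j) := by
  refine llp_pushoutObjObj_ι_of_saturatedClassGen
    (parametrizedAdjunctionOfIsLeftAdjoint (leftAdjointEval (Psh C) (Psh C))) (fun _ _ i hi ↦ ?_) hj
    (E.gluingBothPushoutObjObj j)
  have lambda_gluingBoth : E.Lambda S (E.gluingBoth i) := ⟨1, .glue i (.ofS i hi)⟩
  exact ⟨E.gluingBothPushoutObjObj i, fun _ _ _ hp ↦ hp _ lambda_gluingBoth⟩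

theorem Htpy.comp_right {X Y Z : Psh C} {f g : X ⟶ Y} (h : E.Htpy f g) (k : Y ⟶ Z) :
    E.Htpy (f ≫ k) (g ≫ k) :=
  have ⟨θ, h0, h1⟩ := h
  ⟨θ ≫ k, by rw [reassoc_of% h0], by rw [reassoc_of% h1]⟩

lemma NaivelyFibrant.exists_extension {K L A : Psh C} (hA : E.NaivelyFibrant S A) {i : K ⟶ L}
    (hi : E.Anodyne S i) (u : K ⟶ A) : ∃ v : L ⟶ A, i ≫ v = u := by
  have sq : CommSq u i (terminal.from A) (terminal.from L) := ⟨Subsingleton.elim _ _⟩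
  have := hA i hi
  exact ⟨sq.lift, sq.fac_left⟩

theorem NaivelyFibrant.htpy_of_htpy_comp {K L A : Psh C} (hA : E.NaivelyFibrant S A) {j : K ⟶ L}
    (hj : E.Anodyne S (E.gluingBoth j)) {u v : L ⟶ A} (h : E.Htpy (j ≫ u) (j ≫ v)) :
    E.Htpy u v := by
  obtain ⟨θ, h0, h1⟩ := h
  have agree : coprod.desc (E.d0.app K) (E.d1.app K) ≫ θ = coprod.map j j ≫ coprod.desc u v := by
    simp [h0, h1]
  obtain ⟨Θ, hΘ⟩ := hA.exists_extension hj (pushout.desc θ (coprod.desc u v) agree)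
  have boundary_Θ : E.boundary.app L ≫ Θ = coprod.desc u v := by
    simpa only [gluingBoth, boundary, pushout.inr_desc_assoc, pushout.inr_desc] using
      pushout.inr _ _ ≫= hΘ
  refine ⟨Θ, ?_, ?_⟩
  · simpa only [boundary, coprod.inl_desc_assoc, coprod.inl_desc] using coprod.inl ≫= boundary_Θ
  · simpa only [boundary, coprod.inr_desc_assoc, coprod.inr_desc] using coprod.inr ≫= boundary_Θ

end ElementaryHomotopyData

theorem monad_preserves_homotopy_general {C : Type u} [SmallCategory C]
    (E : ElementaryHomotopyData C) {T : Psh C ⥤ Psh C} (η : 𝟭 (Psh C) ⟶ T)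
    {S : MorphismProperty (Psh C)} {X Y : Psh C} (hX : SaturatedClassGen.{w} S (η.app X))
    (hY : E.NaivelyFibrant S (T.obj Y)) {f g : X ⟶ Y} (h : E.Htpy f g) :
    E.Htpy (T.map f) (T.map g) := by
  have h_unit : E.Htpy (η.app X ≫ T.map f) (η.app X ≫ T.map g) := by
    simpa only [← η.naturality, Functor.id_map] using h.comp_right (η.app Y)
  exact hY.htpy_of_htpy_comp
    (ElementaryHomotopyData.anodyne_gluingBoth_of_saturatedClassGen hX) h_unit

/-- Lemma: under (M1)-(M3), `T` preserves the homotopy relation: a homotopy from `f` to `g`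
yields a homotopy from `Tf` to `Tg`. -/
theorem monad_preserves_homotopy {C : Type u} [SmallCategory C]
    (E : ElementaryHomotopyData C) (T : Monad (Psh C))
    (hM1a : ∀ ⦃K L : Psh C⦄ (j : K ⟶ L), CategoryTheory.Mono j →
      CategoryTheory.Mono (T.toFunctor.map j))
    (hM1b : ∀ X : Psh C, CategoryTheory.Mono (T.η.app X))
    {ι : Type u} (G : ι → Psh C)
    (hM2 : ∀ X : Psh C, SaturatedClassGen.{u} (unitsOf T G) (T.η.app X))
    (hM3 : ∀ A : T.Algebra, E.NaivelyFibrant (unitsOf T G) A.A)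
    {X Y : Psh C} (f g : X ⟶ Y) (h : E.Htpy f g) :
    E.Htpy (T.toFunctor.map f) (T.toFunctor.map g) :=
  monad_preserves_homotopy_general E T.η (hM2 X) (hM3 (T.free.obj Y)) h

end PaperMSMonad
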